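/- Let f(x) := (8/3)(1-x)^{3/2} for x ≤ 0 and f(x) := 8/3 - 4x + x² + (1/6)x³ + (1/16)x⁴ for x > 0. Then f is twice continuously differentiable on ℝ, and both f and f'' are convex on ℝ. -/

import Mathlib

/-!
The two branches of `fEx` agree at `0` to third order, so three successive derivatives of `fEx` are
obtained by differentiating each branch separately (`hasDerivAt_glue`). The second derivative, with
branches `2 (1 - x) ^ (-1/2)` and `2 + x + (3/4) x ^ 2`, is nonnegative and differentiable, hence
continuous; this gives `C²` and convexity of `fEx`. The third derivative, with branches
`(1 - x) ^ (-3/2)` and `1 + (3/2) x`, is increasing on each side of `0` and equals `1` there, so it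
is monotone and the second derivative is convex.
-/

open Real

noncomputable def fEx (x : ℝ) : ℝ :=
  if x ≤ 0 then (8 / 3) * (1 - x) ^ ((3 : ℝ) / 2)
  else 8 / 3 - 4 * x + x ^ 2 + (1 / 6) * x ^ 3 + (1 / 16) * x ^ 4

/-- The function equal to `g` on `(-∞, 0]` and to `h` on `(0, ∞)`. -/
noncomputable def glue (g h : ℝ → ℝ) (x : ℝ) : ℝ := if x ≤ 0 then g x else h x

lemma glue_of_nonpos {g h : ℝ → ℝ} {x : ℝ} (hx : x ≤ 0) : glue g h x = g x := if_pos hx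

lemma glue_of_nonneg {g h : ℝ → ℝ} (h0 : g 0 = h 0) {x : ℝ} (hx : 0 ≤ x) :
    glue g h x = h x := by
  rcases hx.eq_or_lt with rfl | hx
  · rw [glue_of_nonpos le_rfl, h0]
  · exact if_neg hx.not_ge

lemma hasDerivAt_glue {g h g' h' : ℝ → ℝ} (hg : ∀ x ≤ 0, HasDerivAt g (g' x) x)
    (hh : ∀ x, 0 ≤ x → HasDerivAt h (h' x) x) (h0 : g 0 = h 0) (h0' : g' 0 = h' 0) (x : ℝ) :
    HasDerivAt (glue g h) (glue g' h' x) x := by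
  rcases lt_trichotomy x 0 with hx | rfl | hx
  · rw [glue_of_nonpos hx.le]
    refine (hg x hx.le).congr_of_eventuallyEq ?_
    filter_upwards [Iio_mem_nhds hx] with y hy using glue_of_nonpos (le_of_lt hy)
  · have hl : HasDerivWithinAt (glue g h) (glue g' h' 0) (Set.Iic 0) 0 := by
      rw [glue_of_nonpos le_rfl]
      exact (hg 0 le_rfl).hasDerivWithinAt.congr (fun y hy => glue_of_nonpos hy)
        (glue_of_nonpos le_rfl)
    have hr : HasDerivWithinAt (glue g h) (glue g' h' 0) (Set.Ici 0) 0 := by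
      rw [glue_of_nonneg h0' le_rfl]
      exact (hh 0 le_rfl).hasDerivWithinAt.congr (fun y hy => glue_of_nonneg h0 hy)
        (glue_of_nonneg h0 le_rfl)
    simpa [Set.Iic_union_Ici] using hl.union hr
  · rw [glue_of_nonneg h0' hx.le]
    refine (hh x hx.le).congr_of_eventuallyEq ?_
    filter_upwards [Ioi_mem_nhds hx] with y hy using glue_of_nonneg h0 (le_of_lt hy)

lemma hasDerivAt_const_mul_one_sub_rpow (c p : ℝ) {x : ℝ} (hx : x ≤ 0) :
    HasDerivAt (fun y : ℝ => c * (1 - y) ^ p) (-(c * p) * (1 - x) ^ (p - 1)) x := by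
  have h1 : HasDerivAt (fun y : ℝ => 1 - y) (-1) x := by
    simpa using (hasDerivAt_id x).const_sub 1
  have h2 := (h1.rpow_const (p := p) (Or.inl (by linarith))).const_mul c
  exact h2.congr_deriv (by ring)

/-- The first derivative of `fEx`. -/
noncomputable def fEx₁ : ℝ → ℝ :=
  glue (fun x => -4 * (1 - x) ^ ((1 : ℝ) / 2))
    (fun x => -4 + 2 * x + (1 / 2) * x ^ 2 + (1 / 4) * x ^ 3)

/-- The second derivative of `fEx`. -/
noncomputable def fEx₂ : ℝ → ℝ :=
  glue (fun x => 2 * (1 - x) ^ (-(1 : ℝ) / 2)) (fun x => 2 + x + (3 / 4) * x ^ 2)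

/-- The third derivative of `fEx`. -/
noncomputable def fEx₃ : ℝ → ℝ :=
  glue (fun x => 1 * (1 - x) ^ (-(3 : ℝ) / 2)) (fun x => 1 + (3 / 2) * x)

lemma hasDerivAt_fEx (x : ℝ) : HasDerivAt fEx (fEx₁ x) x := by
  refine hasDerivAt_glue (g := fun x => (8 / 3) * (1 - x) ^ ((3 : ℝ) / 2))
    (h := fun x => 8 / 3 - 4 * x + x ^ 2 + (1 / 6) * x ^ 3 + (1 / 16) * x ^ 4)
    (fun x hx => ?_) (fun x _ => ?_) (by norm_num) (by norm_num) x
  · convert hasDerivAt_const_mul_one_sub_rpow (8 / 3) (3 / 2) hx using 2 <;> norm_num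
  · have hi := hasDerivAt_id x
    have := ((((hi.const_mul 4).const_sub (8 / 3)).add (hi.pow 2)).add
      ((hi.pow 3).const_mul (1 / 6))).add ((hi.pow 4).const_mul (1 / 16))
    exact this.congr_deriv (by simp; ring)

lemma hasDerivAt_fEx₁ (x : ℝ) : HasDerivAt fEx₁ (fEx₂ x) x := by
  refine hasDerivAt_glue (fun x hx => ?_) (fun x _ => ?_) (by norm_num) (by norm_num) x
  · convert hasDerivAt_const_mul_one_sub_rpow (-4) (1 / 2) hx using 2 <;> norm_num
  · have hi := hasDerivAt_id x
    have := (((hi.const_mul 2).const_add (-4)).add ((hi.pow 2).const_mul (1 / 2))).add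
      ((hi.pow 3).const_mul (1 / 4))
    exact this.congr_deriv (by simp; ring)

lemma hasDerivAt_fEx₂ (x : ℝ) : HasDerivAt fEx₂ (fEx₃ x) x := by
  refine hasDerivAt_glue (fun x hx => ?_) (fun x _ => ?_) (by norm_num) (by norm_num) x
  · convert hasDerivAt_const_mul_one_sub_rpow 2 (-1 / 2) hx using 2 <;> norm_num
  · have hi := hasDerivAt_id x
    have := (hi.const_add 2).add ((hi.pow 2).const_mul (3 / 4))
    exact this.congr_deriv (by simp; ring)

lemma fEx₂_nonneg (x : ℝ) : 0 ≤ fEx₂ x := by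
  unfold fEx₂ glue
  split_ifs with hx
  · have : 0 ≤ 1 - x := by linarith
    positivity
  · have : 0 < x := not_le.mp hx
    positivity

lemma monotone_fEx₃ : Monotone fEx₃ := by
  intro x y hxy
  unfold fEx₃ glue
  split_ifs with hx hy hy
  · have := Real.rpow_le_rpow_of_nonpos (x := 1 - y) (y := 1 - x) (z := -3 / 2)
      (by linarith) (by linarith) (by norm_num)
    linarith
  · have := Real.rpow_le_one_of_one_le_of_nonpos (x := 1 - x) (z := -3 / 2)
      (by linarith) (by norm_num)
    linarith
  · linarith
  · linarith

/-- The function `fEx` is twice continuously differentiable, and both `fEx`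
and its second derivative are convex on `ℝ`. -/
theorem fEx_C2_and_convex :
    ContDiff ℝ 2 fEx ∧ ConvexOn ℝ Set.univ fEx ∧
      ConvexOn ℝ Set.univ (deriv (deriv fEx)) := by
  have d0 : Differentiable ℝ fEx := fun x => (hasDerivAt_fEx x).differentiableAt
  have d1 : Differentiable ℝ fEx₁ := fun x => (hasDerivAt_fEx₁ x).differentiableAt
  have d2 : Differentiable ℝ fEx₂ := fun x => (hasDerivAt_fEx₂ x).differentiableAt
  have e0 : deriv fEx = fEx₁ := funext fun x => (hasDerivAt_fEx x).deriv
  have e1 : deriv fEx₁ = fEx₂ := funext fun x => (hasDerivAt_fEx₁ x).deriv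
  have e2 : deriv fEx₂ = fEx₃ := funext fun x => (hasDerivAt_fEx₂ x).deriv
  refine ⟨?_, ?_, ?_⟩
  · rw [show (2 : WithTop ℕ∞) = 1 + 1 from one_add_one_eq_two.symm, contDiff_succ_iff_deriv, e0,
      contDiff_one_iff_deriv, e1]
    exact ⟨d0, by simp, d1, d2.continuous⟩
  · refine convexOn_univ_of_deriv2_nonneg d0 (e0 ▸ d1) fun x => ?_
    rw [Function.iterate_succ_apply, Function.iterate_one, e0, e1]
    exact fEx₂_nonneg x
  · rw [e0, e1]
    exact Monotone.convexOn_univ_of_deriv d2 (e2 ▸ monotone_fEx₃)
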